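/- ψ(3/5) = −γ + (π/2)·√(1 − 2/√5) − (5/4)·ln 5 + (√5/4)·ln((3 + √5)/2), where ψ is the digamma function and γ is the Euler–Mascheroni constant. (This is the corrected form of Jensen's erroneous formula for ψ(3/5).) -/

import Mathlib

noncomputable def digamma (x : ℝ) : ℝ := deriv Real.Gamma x / Real.Gamma x

/-!
The recurrence and the log-convexity of `Γ` give `ψ x + γ = ∑ (1 / (k + 1) - 1 / (x + k))`.
At `x = p / q`, Abel's limit theorem and the orthogonality of the powers of a primitive `q`-th root
of unity `ζ` turn this series into the finite sum `∑ (ζ ^ (-j * p) - 1) * log (1 - ζ ^ j)` over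
`0 < j < q`. Adding the formula for `1 - p / q` leaves only the real parts `log ‖1 - ζ ^ j‖`, and
the reflection formula then separates `ψ (p / q)` from `ψ (1 - p / q)`: this is Gauss's digamma
theorem, of which `3 / 5` is a special case.
-/

open Real Filter Topology Finset

section Digamma

theorem digamma_eq_logDeriv_Gamma : digamma = logDeriv Gamma := rfl

theorem digamma_add_one {x : ℝ} (hx : ∀ m : ℕ, x ≠ -m) :
    digamma (x + 1) = digamma x + 1 / x := by
  have hx0 : x ≠ 0 := by simpa using hx 0
  have hGamma : (fun t ↦ Gamma (t + 1)) =ᶠ[𝓝 x] fun t ↦ t * Gamma t := by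
    filter_upwards [eventually_ne_nhds hx0] with t ht using Gamma_add_one ht
  calc digamma (x + 1) = logDeriv (fun t ↦ Gamma (t + 1)) x := by
        rw [digamma_eq_logDeriv_Gamma, logDeriv_apply, logDeriv_apply, deriv_comp_add_const]
    _ = logDeriv (fun t ↦ t * Gamma t) x := (logDeriv_congr_nhds hGamma).eq_of_nhds
    _ = digamma x + 1 / x := by
        rw [logDeriv_mul x hx0 (Gamma_ne_zero hx) differentiableAt_fun_id
          (differentiableAt_Gamma hx), logDeriv_id', add_comm, digamma_eq_logDeriv_Gamma]

theorem digamma_add_natCast {x : ℝ} (hx : ∀ m : ℕ, x ≠ -m) (n : ℕ) :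
    digamma (x + n) = digamma x + ∑ k ∈ range n, 1 / (x + k) := by
  induction n with
  | zero => simp
  | succ n ih =>
    have hxn (m : ℕ) : x + n ≠ -m := fun h ↦ hx (n + m) (by push_cast; linarith)
    rw [Nat.cast_succ, ← add_assoc, digamma_add_one hxn, ih, sum_range_succ, add_assoc]

theorem digamma_one_sub {x : ℝ} (hx : ∀ n : ℤ, x ≠ n) :
    digamma (1 - x) = digamma x + π * cot (π * x) := by
  have hx₀ (m : ℕ) : x ≠ -m := mod_cast hx (-m)
  have hx₁ (m : ℕ) : 1 - x ≠ -m := fun h ↦ hx (m + 1) (by push_cast; linarith)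
  have hsin : sin (π * x) ≠ 0 := by
    rw [Ne, sin_eq_zero_iff]
    rintro ⟨n, hn⟩
    exact hx n (mul_left_cancel₀ pi_ne_zero (by linarith))
  have hd : DifferentiableAt ℝ (fun t ↦ Gamma (1 - t)) x :=
    (differentiableAt_Gamma hx₁).comp x (by fun_prop)
  have hleft : logDeriv (fun t ↦ Gamma t * Gamma (1 - t)) x = digamma x - digamma (1 - x) := by
    rw [logDeriv_mul (g := fun t ↦ Gamma (1 - t)) x (Gamma_ne_zero hx₀) (Gamma_ne_zero hx₁)
      (differentiableAt_Gamma hx₀) hd,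
      ← Function.comp_def Gamma, logDeriv_comp (differentiableAt_Gamma hx₁) (by fun_prop),
      deriv_const_sub, deriv_id'', mul_neg_one, digamma_eq_logDeriv_Gamma, ← sub_eq_add_neg]
  have hright : logDeriv (fun t ↦ π / sin (π * t)) x = -(π * cot (π * x)) := by
    rw [logDeriv_div x pi_ne_zero hsin (by fun_prop) (by fun_prop), ← Function.comp_def sin,
      logDeriv_comp (by fun_prop) (by fun_prop), logDeriv_sin, logDeriv_const]
    simp [mul_comm]
  rw [funext Gamma_mul_Gamma_one_sub, hright] at hleft
  linarith

theorem hasDerivAt_log_Gamma {x : ℝ} (hx : ∀ m : ℕ, x ≠ -m) :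
    HasDerivAt (log ∘ Gamma) (digamma x) x :=
  (differentiableAt_Gamma hx).hasDerivAt.log (Gamma_ne_zero hx)

theorem ne_neg_natCast_of_pos {x : ℝ} (hx : 0 < x) (m : ℕ) : x ≠ -m := by
  have : (0 : ℝ) ≤ m := m.cast_nonneg
  linarith

theorem slope_log_Gamma_add_one {x : ℝ} (hx : 0 < x) :
    slope (log ∘ Gamma) x (x + 1) = log x := by
  rw [slope_def_field, Function.comp_apply, Function.comp_apply, Gamma_add_one hx.ne',
    log_mul hx.ne' (Gamma_pos_of_pos hx).ne']
  ring

theorem digamma_le_log {x : ℝ} (hx : 0 < x) : digamma x ≤ log x :=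
  slope_log_Gamma_add_one hx ▸
    convexOn_log_Gamma.le_slope_of_hasDerivAt hx (by positivity : (0 : ℝ) < x + 1) (lt_add_one x)
      (hasDerivAt_log_Gamma (ne_neg_natCast_of_pos hx))

theorem log_le_digamma_add_one {x : ℝ} (hx : 0 < x) : log x ≤ digamma (x + 1) :=
  have hx1 : 0 < x + 1 := by positivity
  slope_log_Gamma_add_one hx ▸
    convexOn_log_Gamma.slope_le_of_hasDerivAt hx hx1 (lt_add_one x)
      (hasDerivAt_log_Gamma (ne_neg_natCast_of_pos hx1))

theorem tendsto_digamma_sub_log_atTop :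
    Tendsto (fun x ↦ digamma x - log x) atTop (𝓝 0) := by
  have hlower : Tendsto (fun x : ℝ ↦ -(1 / x)) atTop (𝓝 0) := by
    simpa using (tendsto_inv_atTop_zero (𝕜 := ℝ)).neg
  refine tendsto_of_tendsto_of_tendsto_of_le_of_le' hlower tendsto_const_nhds ?_ ?_
  · filter_upwards [eventually_gt_atTop 0] with x hx
    have := log_le_digamma_add_one hx
    rw [digamma_add_one (ne_neg_natCast_of_pos hx)] at this
    linarith
  · filter_upwards [eventually_gt_atTop 0] with x hx
    linarith [digamma_le_log hx]

theorem tendsto_sum_range_digamma {x : ℝ} (hx : ∀ m : ℕ, x ≠ -m) :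
    Tendsto (fun n : ℕ ↦ ∑ k ∈ range n, (1 / (k + 1 : ℝ) - 1 / (x + k))) atTop
      (𝓝 (digamma x + eulerMascheroniConstant)) := by
  have hdigamma : Tendsto (fun n : ℕ ↦ digamma (x + n) - log (x + n)) atTop (𝓝 0) :=
    tendsto_digamma_sub_log_atTop.comp
      (tendsto_atTop_add_const_left _ x tendsto_natCast_atTop_atTop)
  have hlog : Tendsto (fun n : ℕ ↦ log (n + x) - log n) atTop (𝓝 0) :=
    (tendsto_log_comp_add_sub_log x).comp tendsto_natCast_atTop_atTop
  have hlim := ((tendsto_harmonic_sub_log.sub hlog).sub hdigamma).add_const (digamma x)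
  rw [sub_zero, sub_zero, add_comm] at hlim
  refine hlim.congr fun n ↦ ?_
  rw [digamma_add_natCast hx, sum_sub_distrib, harmonic, add_comm x]
  push_cast
  simp only [one_div]
  ring

end Digamma

section RootsOfUnity

variable {K : Type*} [Field K] {ζ : K} {q : ℕ}

theorem sum_inv_pow_mul_pow_of_isPrimitiveRoot (hζ : IsPrimitiveRoot ζ q) (p m : ℕ) :
    ∑ j ∈ range q, (ζ ^ (j * p))⁻¹ * ζ ^ (j * m) = if m ≡ p [MOD q] then (q : K) else 0 := by
  obtain rfl | hq := Nat.eq_zero_or_pos q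
  · simp
  have hterm (j : ℕ) : (ζ ^ (j * p))⁻¹ * ζ ^ (j * m) = (ζ ^ m / ζ ^ p) ^ j := by
    rw [div_pow, ← pow_mul, ← pow_mul, mul_comm m, mul_comm p, div_eq_inv_mul]
  have hζp : ζ ^ p ≠ 0 := pow_ne_zero p (hζ.ne_zero hq.ne')
  have hone : ζ ^ m / ζ ^ p = 1 ↔ m ≡ p [MOD q] := by
    rw [div_eq_one_iff_eq hζp, (hζ.isOfFinOrder hq.ne').pow_eq_pow_iff_modEq, ← hζ.eq_orderOf]
  simp only [hterm]
  split_ifs with h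
  · simp [hone.mpr h]
  · rw [geom_sum_eq (mt hone.mp h), div_pow, ← pow_mul, ← pow_mul, mul_comm m, mul_comm p,
      pow_mul, pow_mul, hζ.pow_eq_one]
    simp

end RootsOfUnity

section Gauss

variable {ζ : ℂ} {p q : ℕ}

theorem hasSum_mul_pow_div_of_isPrimitiveRoot (hζ : IsPrimitiveRoot ζ q) (hpq : p ≤ q)
    {z : ℂ} (hz : ‖z‖ < 1) :
    HasSum (fun k : ℕ ↦ q * z ^ (q * k + p) / (q * k + p))
      (-∑ j ∈ range q, (ζ ^ (j * p))⁻¹ * Complex.log (1 - ζ ^ j * z)) := by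
  obtain rfl | hq := Nat.eq_zero_or_pos q
  · simp
  have hnorm (j : ℕ) : ‖ζ ^ j * z‖ < 1 := by
    rwa [norm_mul, norm_pow, hζ.norm'_eq_one hq.ne', one_pow, one_mul]
  have hsum := hasSum_sum fun j (_ : j ∈ range q) ↦
    (Complex.hasSum_taylorSeries_neg_log (hnorm j)).mul_left (ζ ^ (j * p))⁻¹
  have hterm (m : ℕ) : ∑ j ∈ range q, (ζ ^ (j * p))⁻¹ * ((ζ ^ j * z) ^ m / m) =
      (if m ≡ p [MOD q] then (q : ℂ) else 0) * (z ^ m / m) := by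
    rw [← sum_inv_pow_mul_pow_of_isPrimitiveRoot hζ, sum_mul]
    refine sum_congr rfl fun j _ ↦ ?_
    rw [mul_pow, ← pow_mul]
    ring
  simp only [hterm, mul_neg, sum_neg_distrib] at hsum
  have hinj : Function.Injective fun k ↦ q * k + p := fun a b h ↦
    Nat.eq_of_mul_eq_mul_left hq (Nat.add_right_cancel h)
  rw [← hinj.hasSum_iff] at hsum
  · refine hsum.congr_fun fun k ↦ ?_
    have hmod : q * k + p ≡ p [MOD q] := by simp [Nat.ModEq]
    simp [hmod, mul_div_assoc]
  · intro m hm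
    rw [ite_mul, zero_mul, ite_eq_right_iff]
    intro hmod
    obtain hlt | hle := lt_or_ge m p
    -- The index `m = 0` occurs when `p = q`; its Taylor term `z ^ 0 / 0` is `0`.
    · have hdvd : q ∣ p - m := (Nat.modEq_iff_dvd' hlt.le).mp hmod
      have hm0 : m = 0 := by have := Nat.le_of_dvd (by lia) hdvd; lia
      simp [hm0]
    · obtain ⟨k, hk⟩ := (Nat.modEq_iff_dvd' hle).mp hmod.symm
      exact absurd ⟨k, by simp only; lia⟩ hm

theorem hasSum_digamma_terms_mul_pow (hζ : IsPrimitiveRoot ζ q) (hq : 0 < q) (hpq : p ≤ q)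
    {z : ℂ} (hz : ‖z‖ < 1) :
    HasSum (fun k : ℕ ↦ z ^ q * ((1 / (k + 1) - 1 / (p / q + k)) * (z ^ q) ^ k))
      (∑ j ∈ range q, ((ζ ^ (j * p))⁻¹ * z ^ (q - p) - 1) * Complex.log (1 - ζ ^ j * z)) := by
  have hq0 : (q : ℂ) ≠ 0 := mod_cast hq.ne'
  -- The factor `z ^ (q - p)` gives both series the same powers `z ^ (q * (k + 1))`.
  have hsum := (hasSum_mul_pow_div_of_isPrimitiveRoot hζ le_rfl hz).sub
    ((hasSum_mul_pow_div_of_isPrimitiveRoot hζ hpq hz).mul_left (z ^ (q - p)))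
  have hterm (k : ℕ) : z ^ q * ((1 / (k + 1) - 1 / (p / q + k)) * (z ^ q) ^ k) =
      q * z ^ (q * k + q) / (q * k + q) - z ^ (q - p) * (q * z ^ (q * k + p) / (q * k + p)) := by
    have hzq : z ^ (q - p) * z ^ (q * k + p) = z ^ q * (z ^ q) ^ k := by
      rw [← pow_mul, ← pow_add, ← pow_add]
      congr 1
      lia
    have hone : (1 : ℂ) / (k + 1) = q / (q * k + q) := by
      rw [← mul_add_one, div_mul_cancel_left₀ hq0, one_div]
    have hp : (1 : ℂ) / (p / q + k) = q / (q * k + p) := by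
      rw [← mul_div_mul_left _ _ hq0, mul_one, mul_add, mul_div_cancel₀ _ hq0, add_comm]
    rw [hone, hp, pow_add, pow_mul]
    linear_combination (q / (q * k + p) : ℂ) * hzq
  have hvalue :
      ∑ j ∈ range q, ((ζ ^ (j * p))⁻¹ * z ^ (q - p) - 1) * Complex.log (1 - ζ ^ j * z) =
        -∑ j ∈ range q, (ζ ^ (j * q))⁻¹ * Complex.log (1 - ζ ^ j * z) -
          z ^ (q - p) * -∑ j ∈ range q, (ζ ^ (j * p))⁻¹ * Complex.log (1 - ζ ^ j * z) := by
    rw [mul_neg, mul_sum, sub_neg_eq_add, neg_add_eq_sub, ← sum_sub_distrib]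
    refine sum_congr rfl fun j _ ↦ ?_
    rw [mul_comm j q, pow_mul ζ q, hζ.pow_eq_one, one_pow]
    ring
  rw [hvalue]
  exact hsum.congr_fun hterm

theorem tendsto_one_sub_pow_mul_log_one_sub (n : ℕ) :
    Tendsto (fun s : ℝ ↦ (1 - s ^ n) * log (1 - s)) (𝓝 1) (𝓝 0) := by
  have hcont : Continuous fun s : ℝ ↦ (∑ i ∈ range n, s ^ i) * ((1 - s) * log (1 - s)) :=
    (by fun_prop : Continuous fun s : ℝ ↦ ∑ i ∈ range n, s ^ i).mul
      (continuous_mul_log.comp (by fun_prop : Continuous fun s : ℝ ↦ 1 - s))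
  convert hcont.tendsto 1 using 2 with s
  · rw [← mul_assoc, geom_sum_mul_neg]
  · simp

theorem one_sub_mem_slitPlane {w : ℂ} (hw : ‖w‖ ≤ 1) (hw1 : w ≠ 1) :
    1 - w ∈ Complex.slitPlane := by
  rw [Complex.mem_slitPlane_iff]
  by_contra! h
  rw [Complex.sub_re, Complex.sub_im, Complex.one_re, Complex.one_im, zero_sub, neg_eq_zero] at h
  have hre : w.re = 1 := by linarith [w.re_le_norm]
  exact hw1 (Complex.ext hre h.2)

theorem tendsto_sum_mul_log_one_sub (hζ : IsPrimitiveRoot ζ q) (hq : 0 < q) (p n : ℕ) :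
    Tendsto (fun s : ℝ ↦ ∑ j ∈ range q,
        ((ζ ^ (j * p))⁻¹ * (s : ℂ) ^ n - 1) * Complex.log (1 - ζ ^ j * s)) (𝓝[<] 1)
      (𝓝 (∑ j ∈ Ico 1 q, ((ζ ^ (j * p))⁻¹ - 1) * Complex.log (1 - ζ ^ j))) := by
  simp only [sum_range_eq_add_Ico _ hq]
  rw [← zero_add (∑ j ∈ Ico 1 q, _)]
  refine Tendsto.add ?_ (tendsto_finsetSum _ fun j hj ↦ ?_)
  · have hreal := ((tendsto_one_sub_pow_mul_log_one_sub n).mono_left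
      (nhdsWithin_le_nhds (s := Set.Iio 1))).neg.ofReal
    rw [neg_zero, Complex.ofReal_zero] at hreal
    refine hreal.congr' ?_
    filter_upwards [self_mem_nhdsWithin] with s hs
    have hs0 : 0 ≤ 1 - s := by linarith [Set.mem_Iio.mp hs]
    push_cast [Complex.ofReal_log hs0]
    rw [zero_mul, pow_zero, inv_one, one_mul, one_mul]
    ring
  · obtain ⟨hj1, hjq⟩ := mem_Ico.mp hj
    have hslit : 1 - ζ ^ j * (1 : ℝ) ∈ Complex.slitPlane := by
      rw [Complex.ofReal_one, mul_one]
      refine one_sub_mem_slitPlane ?_ (hζ.pow_ne_one_of_pos_of_lt (by lia) hjq)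
      rw [norm_pow, hζ.norm'_eq_one hq.ne', one_pow]
    have hcont : ContinuousAt (fun s : ℝ ↦
        ((ζ ^ (j * p))⁻¹ * (s : ℂ) ^ n - 1) * Complex.log (1 - ζ ^ j * s)) 1 :=
      (by fun_prop : ContinuousAt (fun s : ℝ ↦ (ζ ^ (j * p))⁻¹ * (s : ℂ) ^ n - 1) 1).mul
        (ContinuousAt.clog (by fun_prop) hslit)
    simpa using hcont.tendsto.mono_left nhdsWithin_le_nhds

theorem tendsto_pow_nhdsLT_one {n : ℕ} (hn : n ≠ 0) :
    Tendsto (fun s : ℝ ↦ s ^ n) (𝓝[<] 1) (𝓝[<] 1) := by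
  refine tendsto_nhdsWithin_iff.mpr ⟨?_, ?_⟩
  · simpa using ((continuous_pow n).tendsto (1 : ℝ)).mono_left nhdsWithin_le_nhds
  · filter_upwards [Ioo_mem_nhdsLT one_pos] with s hs
    exact pow_lt_one₀ hs.1.le hs.2 hn

theorem digamma_div_eq_sum_mul_log (hζ : IsPrimitiveRoot ζ q) (hp : 0 < p) (hpq : p ≤ q) :
    ((digamma (p / q) + eulerMascheroniConstant : ℝ) : ℂ) =
      ∑ j ∈ Ico 1 q, ((ζ ^ (j * p))⁻¹ - 1) * Complex.log (1 - ζ ^ j) := by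
  have hq : 0 < q := hp.trans_le hpq
  have hpartial : Tendsto (fun n : ℕ ↦ ∑ k ∈ range n, (1 / (k + 1) - 1 / (p / q + k) : ℂ)) atTop
      (𝓝 (digamma (p / q) + eulerMascheroniConstant : ℝ)) := by
    simpa using (tendsto_sum_range_digamma
      (ne_neg_natCast_of_pos (by positivity : 0 < (p / q : ℝ)))).ofReal
  have habel := (tendsto_map'_iff.mp (Complex.tendsto_tsum_powerSeries_nhdsWithin_lt hpartial)).comp
    (tendsto_pow_nhdsLT_one hq.ne')
  have hpow : Tendsto (fun s : ℝ ↦ (s : ℂ) ^ q) (𝓝[<] 1) (𝓝 1) := by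
    simpa using ((tendsto_pow_nhdsLT_one hq.ne').mono_right nhdsWithin_le_nhds).ofReal
  have hlim := hpow.mul habel
  rw [one_mul] at hlim
  refine tendsto_nhds_unique hlim ((tendsto_sum_mul_log_one_sub hζ hq p (q - p)).congr' ?_)
  filter_upwards [Ioo_mem_nhdsLT one_pos] with s hs
  have hnorm : ‖(s : ℂ)‖ < 1 := by
    rw [Complex.norm_real, norm_of_nonneg hs.1.le]
    exact hs.2
  rw [← (hasSum_digamma_terms_mul_pow hζ hq hpq hnorm).tsum_eq, tsum_mul_left]
  simp

theorem digamma_add_digamma_one_sub (hζ : IsPrimitiveRoot ζ q) (hp : 0 < p) (hpq : p < q) :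
    digamma (p / q) + digamma (1 - p / q) = -2 * eulerMascheroniConstant +
      2 * ∑ j ∈ Ico 1 q, ((ζ ^ (j * p)).re - 1) * log ‖1 - ζ ^ j‖ := by
  have hq0 : (q : ℝ) ≠ 0 := mod_cast (hp.trans hpq).ne'
  have hcast : ((q - p : ℕ) : ℝ) / q = 1 - p / q := by
    rw [Nat.cast_sub hpq.le, sub_div, div_self hq0]
  have hleft := digamma_div_eq_sum_mul_log hζ hp hpq.le
  have hright := digamma_div_eq_sum_mul_log hζ (Nat.sub_pos_of_lt hpq) (q.sub_le p)
  rw [hcast] at hright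
  have hterm (j : ℕ) : ((ζ ^ (j * p))⁻¹ - 1) * Complex.log (1 - ζ ^ j) +
      ((ζ ^ (j * (q - p)))⁻¹ - 1) * Complex.log (1 - ζ ^ j) =
      ((2 * ((ζ ^ (j * p)).re - 1) : ℝ) : ℂ) * Complex.log (1 - ζ ^ j) := by
    have hone : ζ ^ (j * (q - p)) * ζ ^ (j * p) = 1 := by
      rw [← pow_add, ← mul_add, Nat.sub_add_cancel hpq.le, mul_comm, pow_mul, hζ.pow_eq_one,
        one_pow]
    have hconj : (ζ ^ (j * p))⁻¹ = starRingEnd ℂ (ζ ^ (j * p)) := by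
      refine Complex.inv_eq_conj ?_
      rw [norm_pow, hζ.norm'_eq_one (hp.trans hpq).ne', one_pow]
    have hre := Complex.add_conj (ζ ^ (j * p))
    rw [inv_eq_of_mul_eq_one_right hone, hconj]
    push_cast at hre ⊢
    linear_combination Complex.log (1 - ζ ^ j) * hre
  have hsum := congrArg Complex.re (congrArg₂ (· + ·) hleft hright)
  simp only [← sum_add_distrib, hterm, ← Complex.ofReal_add, Complex.ofReal_re, Complex.re_sum,
    Complex.re_ofReal_mul, Complex.log_re, mul_assoc, ← mul_sum] at hsum
  linarith

theorem sum_log_norm_one_sub_pow (hζ : IsPrimitiveRoot ζ q) (hq : 0 < q) :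
    ∑ j ∈ Ico 1 q, log ‖1 - ζ ^ j‖ = log q := by
  have hne : ∀ j ∈ Ico 1 q, ‖1 - ζ ^ j‖ ≠ 0 := fun j hj ↦ by
    obtain ⟨hj1, hjq⟩ := mem_Ico.mp hj
    exact norm_ne_zero_iff.mpr (sub_ne_zero.mpr (hζ.pow_ne_one_of_pos_of_lt (by lia) hjq).symm)
  obtain ⟨n, rfl⟩ := Nat.exists_eq_succ_of_ne_zero hq.ne'
  rw [← log_prod hne, ← norm_prod, prod_Ico_eq_prod_range]
  simp only [add_comm 1]
  rw [Nat.succ_sub_one, hζ.prod_one_sub_pow_eq_order]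
  norm_cast

theorem norm_one_sub_exp_ofReal_mul_I (x : ℝ) :
    ‖1 - Complex.exp (x * Complex.I)‖ = |2 * sin (x / 2)| := by
  rw [norm_sub_rev, mul_comm, Complex.norm_exp_I_mul_ofReal_sub_one, norm_eq_abs]

theorem exp_two_pi_mul_I_div_pow (q j : ℕ) :
    Complex.exp (2 * π * Complex.I / q) ^ j = Complex.exp ((2 * π * j / q : ℝ) * Complex.I) := by
  rw [← Complex.exp_nat_mul]
  push_cast
  ring_nf

theorem log_norm_one_sub_exp_pow (q j : ℕ) :
    log ‖1 - Complex.exp (2 * π * Complex.I / q) ^ j‖ = log (2 * sin (π * j / q)) := by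
  rw [exp_two_pi_mul_I_div_pow, norm_one_sub_exp_ofReal_mul_I, log_abs]
  ring_nf

theorem sum_log_two_mul_sin (hq : 0 < q) :
    ∑ j ∈ Ico 1 q, log (2 * sin (π * j / q)) = log q := by
  rw [← sum_log_norm_one_sub_pow (Complex.isPrimitiveRoot_exp q hq.ne') hq]
  simp only [log_norm_one_sub_exp_pow]

/-- **Gauss's digamma theorem**. -/
theorem digamma_natCast_div_natCast (hp : 0 < p) (hpq : p < q) :
    digamma (p / q) = -eulerMascheroniConstant - log q - π / 2 * cot (π * (p / q)) +
      ∑ j ∈ Ico 1 q, cos (2 * π * (j * p) / q) * log (2 * sin (π * j / q)) := by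
  have hq : 0 < q := hp.trans hpq
  have hsum := digamma_add_digamma_one_sub (Complex.isPrimitiveRoot_exp q hq.ne') hp hpq
  have hcos (j : ℕ) : (Complex.exp (2 * π * Complex.I / q) ^ (j * p)).re =
      cos (2 * π * (j * p) / q) := by
    rw [exp_two_pi_mul_I_div_pow, Complex.exp_ofReal_mul_I_re, Nat.cast_mul]
  have hnot_int (n : ℤ) : (p / q : ℝ) ≠ n := by
    intro hn
    have hpos : (0 : ℝ) < n := hn ▸ by positivity
    have hlt : (n : ℝ) < 1 := hn ▸ (div_lt_one (by positivity)).mpr (mod_cast hpq)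
    norm_cast at hpos hlt
    lia
  simp only [hcos, log_norm_one_sub_exp_pow, sub_one_mul, sum_sub_distrib,
    sum_log_two_mul_sin hq] at hsum
  rw [digamma_one_sub hnot_int] at hsum
  linarith

end Gauss

section ThreeFifths

theorem cos_two_mul_pi_div_five : cos (2 * (π / 5)) = (√5 - 1) / 4 := by
  rw [cos_two_mul, cos_pi_div_five]
  linear_combination sq_sqrt (show (0 : ℝ) ≤ 5 by norm_num) / 8

theorem cot_three_mul_pi_div_five : cot (π * (3 / 5)) = -√(1 - 2 / √5) := by
  have h5 : √5 ^ 2 = 5 := sq_sqrt (by norm_num)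
  have hcos_sq : cos (2 * (π / 5)) ^ 2 = (3 - √5) / 8 := by
    rw [cos_two_mul_pi_div_five]
    linear_combination h5 / 16
  have hcos : 0 ≤ cos (2 * (π / 5)) :=
    cos_nonneg_of_mem_Icc ⟨by linarith [pi_pos], by linarith [pi_pos]⟩
  have hsin : 0 ≤ sin (2 * (π / 5)) := sin_nonneg_of_mem_Icc ⟨by positivity, by linarith [pi_pos]⟩
  have hsq : 1 - 2 / √5 = (cos (2 * (π / 5)) / sin (2 * (π / 5))) ^ 2 := by
    rw [div_pow, sin_sq, hcos_sq, eq_div_iff (by linarith [sqrt_nonneg 5])]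
    field_simp
    linear_combination 2 * h5
  rw [show π * (3 / 5) = π - 2 * (π / 5) by ring, cot_eq_cos_div_sin, cos_pi_sub, sin_pi_sub,
    neg_div, hsq, sqrt_sq (div_nonneg hcos hsin)]

theorem log_two_mul_cos_pi_div_five :
    log (2 * cos (π / 5)) = log ((3 + √5) / 2) / 2 := by
  have hsq : (3 + √5) / 2 = (2 * cos (π / 5)) ^ 2 := by
    rw [cos_pi_div_five]
    linear_combination -sq_sqrt (show (0 : ℝ) ≤ 5 by norm_num) / 4
  rw [hsq, log_pow]
  simp

theorem log_two_mul_sin_two_mul {x : ℝ} (hs : sin x ≠ 0) (hc : cos x ≠ 0) :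
    log (2 * sin (2 * x)) = log (2 * sin x) + log (2 * cos x) := by
  rw [sin_two_mul, ← log_mul (by simpa) (by simpa)]
  ring_nf

theorem log_two_mul_sin_two_mul_pi_div_five :
    log (2 * sin (2 * (π / 5))) = log (2 * sin (π / 5)) + log ((3 + √5) / 2) / 2 := by
  have hsin : 0 < sin (π / 5) := sin_pos_of_pos_of_lt_pi (by positivity) (by linarith [pi_pos])
  have hcos : 0 < cos (π / 5) := cos_pos_of_mem_Ioo ⟨by linarith [pi_pos], by linarith [pi_pos]⟩
  rw [log_two_mul_sin_two_mul hsin.ne' hcos.ne', log_two_mul_cos_pi_div_five]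

theorem sin_three_mul_pi_div_five : sin (π * 3 / 5) = sin (2 * (π / 5)) := by
  rw [← sin_pi_sub]
  ring_nf

theorem sin_four_mul_pi_div_five : sin (π * 4 / 5) = sin (π / 5) := by
  rw [← sin_pi_sub]
  ring_nf

theorem sum_Ico_one_five {M : Type*} [AddCommMonoid M] (f : ℕ → M) :
    ∑ j ∈ Ico 1 5, f j = f 1 + f 2 + f 3 + f 4 := by
  simp [sum_Ico_succ_top]

theorem log_two_mul_sin_pi_div_five :
    log (2 * sin (π / 5)) = (log 5 - log ((3 + √5) / 2)) / 4 := by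
  have hsum := sum_log_two_mul_sin (q := 5) (by norm_num)
  rw [sum_Ico_one_five] at hsum
  push_cast at hsum
  rw [mul_one, sin_three_mul_pi_div_five, sin_four_mul_pi_div_five, mul_comm π 2, mul_div_assoc,
    log_two_mul_sin_two_mul_pi_div_five] at hsum
  linarith

theorem sum_cos_mul_log_two_mul_sin_five :
    ∑ j ∈ Ico (1 : ℕ) 5, cos (2 * π * (j * 3) / 5) * log (2 * sin (π * j / 5)) =
      √5 / 4 * log ((3 + √5) / 2) - 1 / 4 * log 5 := by
  have hcos₁ : cos (2 * π * (1 * 3) / 5) = -cos (π / 5) := by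
    rw [← cos_add_pi]
    ring_nf
  have hcos₂ : cos (2 * π * (2 * 3) / 5) = cos (2 * (π / 5)) := by
    rw [← cos_add_two_pi (2 * (π / 5))]
    ring_nf
  have hcos₃ : cos (2 * π * (3 * 3) / 5) = cos (2 * (π / 5)) := by
    rw [← cos_nat_mul_two_pi_sub (2 * (π / 5)) 2]
    ring_nf
  have hcos₄ : cos (2 * π * (4 * 3) / 5) = -cos (π / 5) := by
    rw [← cos_pi_sub, ← cos_add_nat_mul_two_pi (π - π / 5) 2]
    ring_nf
  rw [sum_Ico_one_five]
  push_cast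
  rw [hcos₁, hcos₂, hcos₃, hcos₄, mul_one, sin_three_mul_pi_div_five, sin_four_mul_pi_div_five,
    mul_comm π 2, mul_div_assoc, log_two_mul_sin_two_mul_pi_div_five, log_two_mul_sin_pi_div_five,
    cos_pi_div_five, cos_two_mul_pi_div_five]
  ring

end ThreeFifths

theorem digamma_three_fifths :
    digamma (3 / 5) =
      -Real.eulerMascheroniConstant
        + (Real.pi / 2) * Real.sqrt (1 - 2 / Real.sqrt 5)
        - (5 / 4) * Real.log 5
        + (Real.sqrt 5 / 4) * Real.log ((3 + Real.sqrt 5) / 2) := by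
  have hgauss := digamma_natCast_div_natCast (p := 3) (q := 5) (by norm_num) (by norm_num)
  push_cast at hgauss
  rw [hgauss, cot_three_mul_pi_div_five, sum_cos_mul_log_two_mul_sin_five]
  ring
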